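/- arXiv:1210.4965 — 2 statements merged into one kernel-verified Lean document; each statement's English description precedes it below -/
import Mathlib

section
/- Suppose p ≥ 3 and let G be a p-central finite p-group, i.e., Ω_1(G) ≤ Z(G). If d(G) = log_p |Ω_1(G)|, then G is powerful. -/
/-- The minimal size of a generating set of a group. -/
noncomputable def genNum (G : Type*) [Group G] : ℕ :=
  sInf {n | ∃ S : Finset G, S.card = n ∧ Subgroup.closure (S : Set G) = ⊤}

/-- `Ω₁(G)`: the subgroup generated by the elements of order dividing `p`. -/
def Omega1 (p : ℕ) (G : Type*) [Group G] : Subgroup G :=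
  Subgroup.closure {g : G | g ^ p = 1}

/-- `G^p`: the subgroup generated by the `p`-th powers. -/
def pPowFin (p : ℕ) (G : Type*) [Group G] : Subgroup G :=
  Subgroup.closure {x : G | ∃ g : G, g ^ p = x}

/-- If `c` is central and `y * a = a * y * c`, then `(a * y) ^ n` can be expanded as in a group of
nilpotency class two. -/
theorem mul_pow_of_mul_eq_mul_mul_central {G : Type*} [Group G] {a y c : G}
    (hc : c ∈ Subgroup.center G) (h : y * a = a * y * c) (n : ℕ) :
    (a * y) ^ n = a ^ n * y ^ n * c ^ n.choose 2 := by
  have comm (k : ℕ) (g : G) : g * c ^ k = c ^ k * g :=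
    Subgroup.mem_center_iff.1 (pow_mem hc k) g
  have hy (k : ℕ) : y ^ k * a = a * y ^ k * c ^ k := by
    induction k with
    | zero => simp
    | succ k ih =>
      calc y ^ (k + 1) * a = y ^ k * (y * a) := by rw [pow_succ, mul_assoc]
        _ = y ^ k * a * y * c := by rw [h]; group
        _ = a * y ^ k * (c ^ k * y) * c := by rw [ih]; group
        _ = a * y ^ (k + 1) * c ^ (k + 1) := by rw [← comm]; group
  induction n with
  | zero => simp
  | succ n ih =>
    calc (a * y) ^ (n + 1) = a ^ n * y ^ n * (c ^ n.choose 2 * (a * y)) := by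
          rw [pow_succ, ih, mul_assoc]
      _ = a ^ n * (y ^ n * a) * y * c ^ n.choose 2 := by rw [← comm]; group
      _ = a ^ n * a * y ^ n * (c ^ n * y) * c ^ n.choose 2 := by rw [hy]; group
      _ = a ^ n * a * y ^ n * y * (c ^ n * c ^ n.choose 2) := by rw [← comm]; group
      _ = a ^ (n + 1) * y ^ (n + 1) * c ^ (n + 1).choose 2 := by
          rw [← pow_add, Nat.choose_succ_succ' n 1, Nat.choose_one_right, pow_succ a, pow_succ y]
          group

theorem mem_Omega1_of_pow_eq_one {p : ℕ} {G : Type*} [Group G] {x : G} (h : x ^ p = 1) :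
    x ∈ Omega1 p G :=
  Subgroup.subset_closure h

theorem Omega1_subgroup_le_center {p : ℕ} {G : Type*} [Group G]
    (hC : Omega1 p G ≤ Subgroup.center G) (H : Subgroup G) :
    Omega1 p H ≤ Subgroup.center H := by
  refine (Subgroup.closure_le _).2 fun x hx => Subgroup.mem_center_iff.2 fun g => ?_
  have hx' : (x : G) ^ p = 1 := by exact_mod_cast congrArg Subtype.val hx
  exact Subtype.ext (Subgroup.mem_center_iff.1 (hC (mem_Omega1_of_pow_eq_one hx')) g)

/-- In a finite `p`-group, every element is either central or contained in a proper normal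
subgroup. -/
theorem IsPGroup.forall_commute_or_exists_ne_top {p : ℕ} [Fact p.Prime] {G : Type*} [Group G]
    [Finite G] (hG : IsPGroup p G) (a : G) :
    (∀ g, Commute g a) ∨ ∃ H : Subgroup G, H ≠ ⊤ ∧ H.Normal ∧ a ∈ H := by
  have := hG.isNilpotent
  obtain h | ⟨M, hM, haM⟩ := eq_top_or_exists_le_coatom (Subgroup.zpowers a)
  · left
    intro g
    obtain ⟨k, rfl⟩ := Subgroup.mem_zpowers_iff.1 (h ▸ Subgroup.mem_top g)
    exact (Commute.refl a).zpow_left k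
  · exact Or.inr ⟨M, hM.1, Subgroup.NormalizerCondition.normal_of_coatom M
      Group.normalizerCondition_of_isNilpotent hM, haM (Subgroup.mem_zpowers a)⟩

/-- In a `p`-central finite `p`-group with `p` odd, the `p`-th power map is injective modulo
`Ω₁`. -/
theorem mul_inv_pow_eq_one_of_pow_eq_pow {p : ℕ} [Fact p.Prime] (hp3 : 3 ≤ p) {G : Type*}
    [Group G] [Finite G] (hG : IsPGroup p G) (hC : Omega1 p G ≤ Subgroup.center G) {x y : G}
    (hxy : x ^ p = y ^ p) : (x * y⁻¹) ^ p = 1 := by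
  induction hn : Nat.card G using Nat.strong_induction_on generalizing G with
  | _ n ih =>
  subst hn
  have conj_mem (a g : G) (ha : a ^ p ∈ Omega1 p G) : (g * a * g⁻¹ * a⁻¹) ^ p = 1 := by
    obtain h | ⟨H, hH, hN, haH⟩ := hG.forall_commute_or_exists_ne_top a
    · rw [(h g).eq]; simp
    · have hlt : Nat.card H < Nat.card G :=
        lt_of_le_of_ne H.card_le_card_group fun h => hH (Subgroup.eq_top_of_card_eq H h)
      have := ih _ hlt (hG.to_subgroup H) (Omega1_subgroup_le_center hC H)
        (x := ⟨g * a * g⁻¹, hN.conj_mem a haH g⟩) (y := ⟨a, haH⟩)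
        (Subtype.ext (by
          change (g * a * g⁻¹) ^ p = a ^ p
          rw [conj_pow, Subgroup.mem_center_iff.1 (hC ha) g, mul_inv_cancel_right])) rfl
      exact congrArg Subtype.val this
  obtain h1 | hdvd := hG.card_eq_or_dvd
  · have := (Nat.card_eq_one_iff_unique.1 h1).1
    exact Subsingleton.elim _ _
  have hN : (Omega1 p G).Normal := ⟨fun a ha g => by
    rwa [Subgroup.mem_center_iff.1 (hC ha) g, mul_inv_cancel_right]⟩
  have hlt : Nat.card (G ⧸ Omega1 p G) < Nat.card G := by
    obtain ⟨z, hz⟩ := exists_prime_orderOf_dvd_card' p hdvd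
    have hz1 : z ∈ Omega1 p G := mem_Omega1_of_pow_eq_one (hz ▸ pow_orderOf_eq_one z)
    have hne : Omega1 p G ≠ ⊥ := by
      intro h
      rw [h, Subgroup.mem_bot] at hz1
      rw [hz1, orderOf_one] at hz
      omega
    rw [(Omega1 p G).card_eq_card_quotient_mul_card_subgroup]
    exact lt_mul_of_one_lt_right Nat.card_pos ((Omega1 p G).one_lt_card_iff_ne_bot.2 hne)
  have hQ : Omega1 p (G ⧸ Omega1 p G) ≤ Subgroup.center (G ⧸ Omega1 p G) := by
    refine (Subgroup.closure_le _).2 fun q hq => Subgroup.mem_center_iff.2 fun r => ?_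
    induction q using QuotientGroup.induction_on with | _ a
    induction r using QuotientGroup.induction_on with | _ g
    have ha : a ^ p ∈ Omega1 p G := (QuotientGroup.eq_one_iff _).1 hq
    have := (QuotientGroup.eq_one_iff _).2 (mem_Omega1_of_pow_eq_one (conj_mem a g ha))
    simp only [QuotientGroup.mk_mul, QuotientGroup.mk_inv] at this
    rwa [mul_inv_eq_one, mul_inv_eq_iff_eq_mul] at this
  have hq := ih _ hlt (hG.to_quotient _) hQ (x := (x : G ⧸ Omega1 p G)) (y := y)
    (by rw [← QuotientGroup.mk_pow, hxy, QuotientGroup.mk_pow]) rfl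
  have hmem : (x * y⁻¹) ^ p ∈ Omega1 p G := (QuotientGroup.eq_one_iff _).1 hq
  set a := x * y⁻¹ with ha
  have hcp := conj_mem a y hmem
  have hcc := hC (mem_Omega1_of_pow_eq_one hcp)
  have h2 := mul_pow_of_mul_eq_mul_mul_central (a := a) (y := y) hcc
    (by rw [Subgroup.mem_center_iff.1 hcc (a * y)]; group) p
  obtain ⟨k, hk⟩ := (Fact.out : p.Prime).dvd_choose_self (k := 2) (by omega) (by omega)
  rw [hk, pow_mul, hcp, one_pow, mul_one, ha, inv_mul_cancel_right, hxy] at h2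
  exact right_eq_mul.1 h2

theorem index_pPowFin_le_card_Omega1 {p : ℕ} [Fact p.Prime] (hp3 : 3 ≤ p) {G : Type*}
    [Group G] [Finite G] (hG : IsPGroup p G) (hC : Omega1 p G ≤ Subgroup.center G) :
    (pPowFin p G).index ≤ Nat.card (Omega1 p G) := by
  have hcard : Nat.card (G ⧸ Omega1 p G) ≤ Nat.card (pPowFin p G) := by
    refine Nat.card_le_card_of_injective
      (fun q => ⟨q.out ^ p, Subgroup.subset_closure ⟨_, rfl⟩⟩) fun q r h => ?_
    have h' : q.out⁻¹ ^ p = r.out⁻¹ ^ p := by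
      rw [inv_pow, inv_pow, Subtype.mk.inj h]
    rw [← q.out_eq', ← r.out_eq']
    refine QuotientGroup.eq.2 (mem_Omega1_of_pow_eq_one ?_)
    simpa using mul_inv_pow_eq_one_of_pow_eq_pow hp3 hG hC h'
  refine Nat.le_of_mul_le_mul_left ?_ (Nat.card_pos (α := pPowFin p G))
  rw [Subgroup.card_mul_index, (Omega1 p G).card_eq_card_quotient_mul_card_subgroup]
  exact Nat.mul_le_mul_right _ hcard

theorem IsPGroup.exists_finset_closure_eq_top {p : ℕ} [Fact p.Prime] {G : Type*} [Group G]
    [Finite G] (hG : IsPGroup p G) :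
    ∃ S : Finset G, Subgroup.closure (S : Set G) = ⊤ ∧ p ^ S.card ≤ Nat.card G := by
  classical
  have := Fintype.ofFinite G
  obtain ⟨S, hS, hmax⟩ := Finset.exists_max_image
    (Finset.univ.filter fun S : Finset G =>
      p ^ S.card ≤ Nat.card (Subgroup.closure (S : Set G)))
    Finset.card ⟨∅, by simp⟩
  simp only [Finset.mem_filter, Finset.mem_univ, true_and] at hS hmax
  refine ⟨S, ?_, hS.trans (Subgroup.card_le_card_group _)⟩
  by_contra hne
  obtain ⟨x, hx⟩ : ∃ x, x ∉ Subgroup.closure (S : Set G) := by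
    by_contra! h
    exact hne (eq_top_iff.2 fun x _ => h x)
  have hxS : x ∉ S := fun h => hx (Subgroup.subset_closure h)
  have hle : Subgroup.closure (S : Set G) ≤ Subgroup.closure (insert x S : Finset G) :=
    Subgroup.closure_mono (by simp)
  have hlt : Subgroup.closure (S : Set G) < Subgroup.closure (insert x S : Finset G) :=
    lt_of_le_of_ne hle fun h => hx (h ▸ Subgroup.subset_closure (by simp))
  have hcard : Nat.card (Subgroup.closure (S : Set G)) <
      Nat.card (Subgroup.closure ((insert x S : Finset G) : Set G)) :=
    Set.Finite.card_lt_card (Set.toFinite _) hlt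
  obtain ⟨m, hm⟩ := IsPGroup.iff_card.1 (hG.to_subgroup (Subgroup.closure (S : Set G)))
  obtain ⟨n, hn⟩ := IsPGroup.iff_card.1
    (hG.to_subgroup (Subgroup.closure ((insert x S : Finset G) : Set G)))
  have hp1 := (Fact.out : p.Prime).one_lt
  have hmn : m < n := (Nat.pow_lt_pow_iff_right hp1).1 (by rw [← hm, ← hn]; exact hcard)
  have hSm : S.card ≤ m := (Nat.pow_le_pow_iff_right hp1).1 (hm ▸ hS)
  have := hmax (insert x S) (by
    rw [hn, Finset.card_insert_of_notMem hxS]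
    exact Nat.pow_le_pow_right hp1.le (by omega))
  rw [Finset.card_insert_of_notMem hxS] at this
  omega

/-- One half of the Burnside basis theorem. -/
theorem IsPGroup.pow_genNum_le_index_frattini {p : ℕ} [Fact p.Prime] {G : Type*} [Group G]
    [Finite G] (hG : IsPGroup p G) : p ^ genNum G ≤ (frattini G).index := by
  classical
  obtain ⟨S, hS, hcard⟩ := (hG.to_quotient (frattini G)).exists_finset_closure_eq_top
  refine (Nat.pow_le_pow_right (Fact.out : p.Prime).pos ?_).trans hcard
  have hT : Subgroup.closure ((S.image Quotient.out : Finset G) : Set G) = ⊤ := by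
    refine frattini_nongenerating ?_
    have hmap : (Subgroup.closure ((S.image Quotient.out : Finset G) : Set G)).map
        (QuotientGroup.mk' (frattini G)) = ⊤ := by
      rw [MonoidHom.map_closure, ← hS]
      congr 1
      ext q
      simp
    have := congrArg (Subgroup.comap (QuotientGroup.mk' (frattini G))) hmap
    rwa [Subgroup.comap_map_eq, QuotientGroup.ker_mk', Subgroup.comap_top] at this
  have hle : genNum G ≤ (S.image Quotient.out).card := Nat.sInf_le ⟨_, rfl, hT⟩
  exact hle.trans Finset.card_image_le

theorem IsPGroup.index_eq_of_isCoatom {p : ℕ} [Fact p.Prime] {G : Type*} [Group G]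
    [Finite G] (hG : IsPGroup p G) {M : Subgroup G} (hM : IsCoatom M) : M.index = p := by
  obtain ⟨m, hm⟩ := IsPGroup.iff_card.1 (hG.to_subgroup M)
  obtain ⟨k, hk⟩ := hG.index M
  have hmul := M.card_mul_index
  have hk0 : k ≠ 0 := by
    rintro rfl
    exact hM.1 (Subgroup.index_eq_one.1 (by simpa using hk))
  have hdvd : p ^ (m + 1) ∣ Nat.card G := by
    rw [← hmul, hm, hk, ← pow_add]
    exact pow_dvd_pow p (by omega)
  obtain ⟨K, hK, hMK⟩ := Sylow.exists_subgroup_card_pow_succ hdvd hm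
  have hp := (Fact.out : p.Prime)
  have hKtop : K = ⊤ := hM.2 K (lt_of_le_of_ne hMK (by
    rintro rfl
    have := Nat.pow_right_injective hp.two_le (hm.symm.trans hK)
    omega))
  rw [hKtop, Subgroup.card_top, ← hmul, hm, pow_succ] at hK
  exact Nat.eq_of_mul_eq_mul_left (pow_pos hp.pos m) hK

theorem IsPGroup.pPowFin_le_frattini {p : ℕ} [Fact p.Prime] {G : Type*} [Group G]
    [Finite G] (hG : IsPGroup p G) : pPowFin p G ≤ frattini G := by
  have := hG.isNilpotent
  refine (Subgroup.closure_le _).2 ?_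
  rintro _ ⟨g, rfl⟩
  simp only [frattini, Order.radical, SetLike.mem_coe, Subgroup.mem_iInf]
  intro M hM
  have := Subgroup.NormalizerCondition.normal_of_coatom M
    Group.normalizerCondition_of_isNilpotent hM
  exact hG.index_eq_of_isCoatom hM ▸ Subgroup.pow_index_mem M g

theorem IsPGroup.commutator_le_frattini {p : ℕ} [Fact p.Prime] {G : Type*} [Group G]
    [Finite G] (hG : IsPGroup p G) : commutator G ≤ frattini G := by
  have := hG.isNilpotent
  refine le_iInf₂ fun M hM => ?_
  have := Subgroup.NormalizerCondition.normal_of_coatom M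
    Group.normalizerCondition_of_isNilpotent hM
  have : IsCyclic (G ⧸ M) := isCyclic_of_prime_card (p := p) (hG.index_eq_of_isCoatom hM)
  exact Subgroup.Normal.quotient_commutative_iff_commutator_le.1 inferInstance

/-- For `p ≥ 3`, a `p`-central finite `p`-group with `d(G) = log_p |Ω₁(G)|` is powerful. -/
theorem powerful_of_pCentral (p : ℕ) (hp : p.Prime) (hp3 : 3 ≤ p)
    (G : Type*) [Group G] [Finite G] (hG : IsPGroup p G)
    (hcentral : Omega1 p G ≤ Subgroup.center G)
    (hd : p ^ genNum G = Nat.card (Omega1 p G)) :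
    commutator G ≤ pPowFin p G := by
  have := Fact.mk hp
  have hle := hG.pPowFin_le_frattini
  have hindex : (pPowFin p G).index ≤ (frattini G).index :=
    (index_pPowFin_le_card_Omega1 hp3 hG hcentral).trans
      (hd ▸ hG.pow_genNum_le_index_frattini)
  have heq : pPowFin p G = frattini G := by
    refine Subgroup.eq_of_le_of_card_ge hle ?_
    have h1 := (pPowFin p G).card_mul_index
    have h2 := (frattini G).card_mul_index
    have h3 : (pPowFin p G).index ≠ 0 := Subgroup.FiniteIndex.index_ne_zero
    by_contra! h
    have := Nat.mul_lt_mul_of_lt_of_le h hindex (Nat.pos_of_ne_zero (by omega))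
    omega
  exact heq ▸ hG.commutator_le_frattini
end

section
/- Suppose p ≥ 3 and let G be a powerful finite p-group. Then d(G) = log_p |Ω_1(G)|. -/
open scoped commutatorElement

theorem mul_pow_of_comm {G : Type*} [Group G] {x c u : G} (h : c * x = x * c * u)
    (huc : Commute u c) (k : ℕ) :
    c ^ k * x = x * c ^ k * u ^ k := by
  induction k with
  | zero => simp
  | succ k ih =>
    calc c ^ (k + 1) * x = c * (c ^ k * x) := by rw [pow_succ', mul_assoc]
      _ = (c * x) * c ^ k * u ^ k := by rw [ih]; simp only [mul_assoc]
      _ = x * c * (u * c ^ k) * u ^ k := by rw [h]; simp only [mul_assoc]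
      _ = x * c ^ (k + 1) * u ^ (k + 1) := by
        rw [(huc.pow_right k).eq, pow_succ' c, pow_succ' u]; simp only [mul_assoc]

theorem mul_pow_eq_of_comm {G : Type*} [Group G] {x c u : G} (h : c * x = x * c * u)
    (huc : Commute u c) (hux : Commute u x) (k : ℕ) :
    (x * c) ^ k = x ^ k * c ^ k * u ^ (k.choose 2) := by
  induction k with
  | zero => simp
  | succ k ih =>
    have h1 : u ^ (k.choose 2) * (x * c) = x * c * u ^ (k.choose 2) :=
      ((hux.mul_right huc).pow_left _).eq
    have h2 : u ^ k * c = c * u ^ k := (huc.pow_left k).eq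
    calc (x * c) ^ (k + 1) = x ^ k * c ^ k * (u ^ (k.choose 2) * (x * c)) := by
          rw [pow_succ, ih, mul_assoc]
      _ = x ^ k * (c ^ k * x) * c * u ^ (k.choose 2) := by rw [h1]; simp only [mul_assoc]
      _ = x ^ k * x * c ^ k * (u ^ k * c) * u ^ (k.choose 2) := by
          rw [mul_pow_of_comm h huc]; simp only [mul_assoc]
      _ = _ := by
          rw [h2, Nat.choose_succ_succ' k 1, Nat.choose_one_right, pow_add u, pow_succ x k,
            pow_succ c k]
          simp only [mul_assoc]

theorem mul_pow_odd {G : Type*} [Group G] {p : ℕ} (hp : Odd p) {x c u : G}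
    (h : c * x = x * c * u) (huc : Commute u c) (hux : Commute u x) (hc : Commute (c ^ p) x) :
    (x * c) ^ p = x ^ p * c ^ p := by
  have hu : u ^ p = 1 := by
    have := mul_pow_of_comm h huc p
    rw [hc.eq] at this
    simpa using this
  obtain ⟨m, rfl⟩ := hp
  have h2 : (2 * m + 1).choose 2 = (2 * m + 1) * m := by
    rw [Nat.choose_two_right, Nat.add_sub_cancel, mul_left_comm, Nat.mul_div_cancel_left _ two_pos]
  rw [mul_pow_eq_of_comm h huc hux, h2, pow_mul, hu, one_pow, mul_one]

theorem conj_pow_odd {G : Type*} [Group G] {p : ℕ} (hp : Odd p) {x f c d : G}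
    (hx : x * f = f * (x * c)) (hc : c * f = f * c * d) (hdc : Commute d c) (hdf : Commute d f)
    (hcf : Commute (c ^ p) f) :
    x * f ^ p = f ^ p * (x * c ^ p) := by
  have key : ∀ k : ℕ, x * f ^ k = f ^ k * (x * c ^ k * d ^ (k.choose 2)) := by
    intro k
    induction k with
    | zero => simp
    | succ k ih =>
      have h1 : d ^ (k.choose 2) * f = f * d ^ (k.choose 2) := (hdf.pow_left _).eq
      calc x * f ^ (k + 1) = f ^ k * (x * c ^ k * (d ^ (k.choose 2) * f)) := by
            rw [pow_succ, ← mul_assoc, ih]; simp only [mul_assoc]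
        _ = f ^ k * (x * (c ^ k * f) * d ^ (k.choose 2)) := by rw [h1]; simp only [mul_assoc]
        _ = f ^ k * ((x * f) * (c ^ k * d ^ k) * d ^ (k.choose 2)) := by
            rw [mul_pow_of_comm hc hdc]; simp only [mul_assoc]
        _ = _ := by
            rw [hx, Nat.choose_succ_succ' k 1, Nat.choose_one_right, pow_add d,
              pow_succ f k, pow_succ' c k]
            simp only [mul_assoc]
  have hd : d ^ p = 1 := by
    have := mul_pow_of_comm hc hdc p
    rw [hcf.eq] at this
    simpa using this
  obtain ⟨m, rfl⟩ := hp
  have h2 : (2 * m + 1).choose 2 = (2 * m + 1) * m := by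
    rw [Nat.choose_two_right, Nat.add_sub_cancel, mul_left_comm, Nat.mul_div_cancel_left _ two_pos]
  rw [key, h2, pow_mul, hd, one_pow, mul_one]

theorem commute_pow_of_pow_commute {G : Type*} [Group G] {p : ℕ} (hp : Odd p) {x f c d u : G}
    (hx : x * f = f * (x * c)) (hcf : c * f = f * c * d) (hcx : c * x = x * c * u)
    (hdc : Commute d c) (hdf : Commute d f) (huc : Commute u c) (hux : Commute u x)
    (hpf : Commute (c ^ p) f) (hpx : Commute (c ^ p) x) (h : Commute (x ^ p) f) :
    Commute x (f ^ p) := by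
  have h1 : x ^ p * f = f * (x * c) ^ p := by
    have : SemiconjBy f (x * c) x := hx.symm
    exact (this.pow_right p).eq.symm
  rw [mul_pow_odd hp hcx huc hux hpx, h.eq, mul_right_inj, left_eq_mul] at h1
  have := conj_pow_odd hp hx hcf hdc hdf hpf
  rwa [h1, mul_one] at this
theorem commutatorElement_mem_iff_commute {G : Type*} [Group G] {E : Subgroup G} [E.Normal]
    {a b : G} : ⁅a, b⁆ ∈ E ↔ Commute (a : G ⧸ E) b := by
  rw [← commutatorElement_eq_one_iff_commute, ← QuotientGroup.eq_one_iff]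
  rfl

/-- The subgroup generated by the `p`-th powers of the elements of `H`. -/
def powSubgroup {G : Type*} [Group G] (p : ℕ) (H : Subgroup G) : Subgroup G :=
  Subgroup.closure {x | ∃ h ∈ H, h ^ p = x}

theorem pow_mem_powSubgroup {G : Type*} [Group G] (p : ℕ) {H : Subgroup G} {h : G} (hh : h ∈ H) :
    h ^ p ∈ powSubgroup p H :=
  Subgroup.subset_closure ⟨h, hh, rfl⟩

theorem powSubgroup_le_iff {G : Type*} [Group G] {p : ℕ} {H K : Subgroup G} :
    powSubgroup p H ≤ K ↔ ∀ h ∈ H, h ^ p ∈ K := by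
  rw [powSubgroup, Subgroup.closure_le]
  exact ⟨fun h x hx => h ⟨x, hx, rfl⟩, fun h x ⟨y, hy, hxy⟩ => hxy ▸ h y hy⟩

theorem powSubgroup_le {G : Type*} [Group G] (p : ℕ) (H : Subgroup G) : powSubgroup p H ≤ H :=
  powSubgroup_le_iff.2 fun _ hh => H.pow_mem hh p

theorem powSubgroup_mono {G : Type*} [Group G] (p : ℕ) {H K : Subgroup G} (h : H ≤ K) :
    powSubgroup p H ≤ powSubgroup p K :=
  powSubgroup_le_iff.2 fun _ hx => pow_mem_powSubgroup p (h hx)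

theorem powSubgroup_top {G : Type*} [Group G] (p : ℕ) :
    powSubgroup p (⊤ : Subgroup G) = pPowFin p G := by
  simp [powSubgroup, pPowFin]

theorem map_powSubgroup {G K : Type*} [Group G] [Group K] (p : ℕ) (f : G →* K) (H : Subgroup G) :
    (powSubgroup p H).map f = powSubgroup p (H.map f) := by
  apply le_antisymm
  · rw [Subgroup.map_le_iff_le_comap, powSubgroup_le_iff]
    intro h hh
    rw [Subgroup.mem_comap, map_pow]
    exact pow_mem_powSubgroup p (Subgroup.mem_map_of_mem f hh)
  · rw [powSubgroup_le_iff]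
    rintro _ ⟨h, hh, rfl⟩
    exact ⟨h ^ p, pow_mem_powSubgroup p hh, map_pow f h p⟩

instance powSubgroup_normal {G : Type*} [Group G] (p : ℕ) (H : Subgroup G) [H.Normal] :
    (powSubgroup p H).Normal := by
  refine ⟨fun n hn g => ?_⟩
  suffices powSubgroup p H ≤ (powSubgroup p H).comap (MulAut.conj g).toMonoidHom from this hn
  rw [powSubgroup_le_iff]
  intro h hh
  rw [Subgroup.mem_comap, map_pow]
  exact pow_mem_powSubgroup p (Subgroup.Normal.conj_mem ‹_› h hh g)

theorem mul_eq_conj_commutator {G : Type*} [Group G] (x f : G) :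
    x * f = f * (x * ⁅x⁻¹, f⁻¹⁆) := by
  simp [commutatorElement_def, mul_assoc]

theorem mul_eq_mul_commutator {G : Type*} [Group G] (c x : G) :
    c * x = x * c * ⁅c⁻¹, x⁻¹⁆ := by
  simp [commutatorElement_def, mul_assoc]

theorem commute_pow_of_commutator_pow_eq_one {G : Type*} [Group G] {p : ℕ} (hp : Odd p)
    {x f c u : G} (hx : x * f = f * (x * c)) (hcx : c * x = x * c * u) (huc : Commute u c)
    (hux : Commute u x) (hc : c ^ p = 1) : Commute (x ^ p) f := by
  have h : SemiconjBy f (x * c) x := hx.symm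
  have := (h.pow_right p).eq
  rw [mul_pow_odd hp hcx huc hux (by simp [hc]), hc, mul_one] at this
  exact this.symm

theorem commutator_powSubgroup_le {G : Type*} [Group G] {p : ℕ} (hp : Odd p)
    {N K E : Subgroup G} [E.Normal] (h1 : ∀ x ∈ N, ∀ g ∈ K, ⁅x⁻¹, g⁻¹⁆ ^ p ∈ E)
    (h2 : ∀ x ∈ N, ∀ g ∈ K, ∀ w, ⁅⁅⁅x⁻¹, g⁻¹⁆⁻¹, x⁻¹⁆, w⁆ ∈ E) :
    ⁅powSubgroup p N, K⁆ ≤ E := by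
  rw [Subgroup.commutator_le]
  intro z hz g hg
  suffices powSubgroup p N ≤
      (Subgroup.centralizer {(g : G ⧸ E)}).comap (QuotientGroup.mk' E) by
    have := this hz
    rw [Subgroup.mem_comap, Subgroup.mem_centralizer_singleton_iff] at this
    exact commutatorElement_mem_iff_commute.2 this
  rw [powSubgroup_le_iff]
  intro x hx
  rw [Subgroup.mem_comap, Subgroup.mem_centralizer_singleton_iff]
  have e1 := congrArg (QuotientGroup.mk' E) (mul_eq_conj_commutator x g)
  have e2 := congrArg (QuotientGroup.mk' E) (mul_eq_mul_commutator ⁅x⁻¹, g⁻¹⁆ x)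
  refine commute_pow_of_commutator_pow_eq_one hp e1 e2
    (commutatorElement_mem_iff_commute.1 (h2 x hx g hg _))
    (commutatorElement_mem_iff_commute.1 (h2 x hx g hg _)) ?_
  exact (QuotientGroup.eq_one_iff _).2 (h1 x hx g hg)

theorem commutator_powSubgroup_le_powSubgroup {G : Type*} [Group G] [Group.IsNilpotent G] {p : ℕ}
    (hp : Odd p) {N : Subgroup G} [N.Normal] (h : ⁅N, ⊤⁆ ≤ powSubgroup p N) :
    ⁅powSubgroup p N, ⊤⁆ ≤ powSubgroup p (powSubgroup p N) := by
  set D := powSubgroup p (powSubgroup p N)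
  set R := ⁅powSubgroup p N, (⊤ : Subgroup G)⁆
  have hR : R ≤ D ⊔ ⁅R, ⊤⁆ := by
    have hc : ∀ x ∈ N, ∀ g : G, ⁅x⁻¹, g⁻¹⁆ ∈ powSubgroup p N := fun x hx g =>
      h (Subgroup.commutator_mem_commutator (N.inv_mem hx) trivial)
    refine commutator_powSubgroup_le hp (fun x hx g _ => ?_) (fun x hx g _ w => ?_)
    · exact Subgroup.mem_sup_left (pow_mem_powSubgroup p (hc x hx g))
    · refine Subgroup.mem_sup_right (Subgroup.commutator_mem_commutator ?_ trivial)
      exact Subgroup.commutator_mem_commutator (inv_mem (hc x hx g)) trivial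
  have hk : ∀ k, R ≤ D ⊔ (⊤ : Subgroup G).lowerCentralSeries k := by
    intro k
    induction k with
    | zero => simp
    | succ k ih =>
      refine hR.trans (sup_le le_sup_left ?_)
      refine (Subgroup.commutator_mono ih le_rfl).trans ?_
      rw [Subgroup.commutator_le]
      intro z hz g _
      suffices D ⊔ (⊤ : Subgroup G).lowerCentralSeries k ≤ (Subgroup.centralizer
          {(g : G ⧸ D ⊔ (⊤ : Subgroup G).lowerCentralSeries (k + 1))}).comap
          (QuotientGroup.mk' _) by
        have := this hz
        rw [Subgroup.mem_comap, Subgroup.mem_centralizer_singleton_iff] at this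
        exact commutatorElement_mem_iff_commute.2 this
      have hmem : ∀ y, ⁅y, g⁆ ∈ D ⊔ (⊤ : Subgroup G).lowerCentralSeries (k + 1) →
          y ∈ (Subgroup.centralizer
          {(g : G ⧸ D ⊔ (⊤ : Subgroup G).lowerCentralSeries (k + 1))}).comap
          (QuotientGroup.mk' _) := by
        intro y hy
        rw [Subgroup.mem_comap, Subgroup.mem_centralizer_singleton_iff]
        exact commutatorElement_mem_iff_commute.1 hy
      refine sup_le (fun y hy => hmem y ?_) (fun y hy => hmem y ?_)
      · exact Subgroup.mem_sup_left (Subgroup.commutator_le_left D ⊤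
          (Subgroup.commutator_mem_commutator hy trivial))
      · refine Subgroup.mem_sup_right ?_
        rw [Subgroup.lowerCentralSeries_succ]
        exact Subgroup.commutator_mem_commutator hy trivial
  obtain ⟨n, hn⟩ := Subgroup.nilpotent_iff_lowerCentralSeries.1 ‹Group.IsNilpotent G›
  simpa [hn] using hk n

/-- The descending series `G ≥ G^p ≥ (G^p)^p ≥ ⋯`. -/
def powSeries (p : ℕ) (G : Type*) [Group G] : ℕ → Subgroup G
  | 0 => ⊤
  | k + 1 => powSubgroup p (powSeries p G k)

instance powSeries_normal (p : ℕ) (G : Type*) [Group G] (k : ℕ) : (powSeries p G k).Normal := by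
  induction k with
  | zero => exact inferInstanceAs (⊤ : Subgroup G).Normal
  | succ k ih => exact powSubgroup_normal p _

theorem powSeries_antitone (p : ℕ) (G : Type*) [Group G] : Antitone (powSeries p G) :=
  antitone_nat_of_succ_le fun _ => powSubgroup_le p _

theorem pow_mem_powSeries {p : ℕ} {G : Type*} [Group G] {k : ℕ} {x : G}
    (hx : x ∈ powSeries p G k) : x ^ p ∈ powSeries p G (k + 1) :=
  pow_mem_powSubgroup p hx

theorem powSeries_one (p : ℕ) (G : Type*) [Group G] : powSeries p G 1 = pPowFin p G :=
  powSubgroup_top p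

theorem commutator_powSeries_top_le {p : ℕ} (hp : Odd p) {G : Type*} [Group G]
    [Group.IsNilpotent G] (hG : commutator G ≤ pPowFin p G) (k : ℕ) :
    ⁅powSeries p G k, ⊤⁆ ≤ powSeries p G (k + 1) := by
  induction k with
  | zero => rw [powSeries_one]; exact hG
  | succ k ih => exact commutator_powSubgroup_le_powSubgroup hp ih

theorem commutator_powSeries_le {p : ℕ} (hp : Odd p) {G : Type*} [Group G]
    [Group.IsNilpotent G] (hG : commutator G ≤ pPowFin p G) (a b : ℕ) :
    ⁅powSeries p G a, powSeries p G b⁆ ≤ powSeries p G (a + b + 1) := by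
  induction a with
  | zero =>
    rw [Subgroup.commutator_comm, zero_add]
    exact (Subgroup.commutator_mono le_rfl le_top).trans (commutator_powSeries_top_le hp hG b)
  | succ a ih =>
    have hc : ∀ x ∈ powSeries p G a, ∀ g ∈ powSeries p G b,
        ⁅x⁻¹, g⁻¹⁆ ∈ powSeries p G (a + b + 1) := fun x hx g hg =>
      ih (Subgroup.commutator_mem_commutator (inv_mem hx) (inv_mem hg))
    have e : a + 1 + b + 1 = a + b + 1 + 1 := by ring
    rw [e]
    refine commutator_powSubgroup_le hp (fun x hx g hg => pow_mem_powSeries (hc x hx g hg))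
      (fun x hx g hg w => ?_)
    refine Subgroup.commutator_le_left _ ⊤ (Subgroup.commutator_mem_commutator ?_ trivial)
    exact commutator_powSeries_top_le hp hG _
      (Subgroup.commutator_mem_commutator (inv_mem (hc x hx g hg)) trivial)

theorem powSubgroup_lt {p : ℕ} [Fact p.Prime] {G : Type*} [Group G] [Finite G] (hG : IsPGroup p G)
    {H : Subgroup G} (hH : H ≠ ⊥) : powSubgroup p H < H := by
  obtain ⟨n, hn⟩ := (hG.to_subgroup H).exists_card_eq
  have hn0 : n ≠ 0 := by
    rintro rfl
    exact hH (Subgroup.eq_bot_of_card_eq H (by simpa using hn))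
  obtain ⟨n, rfl⟩ := Nat.exists_eq_succ_of_ne_zero hn0
  obtain ⟨K, hK⟩ := Sylow.exists_subgroup_card_pow_prime p (G := H) (n := n)
    (hn ▸ pow_dvd_pow p n.le_succ)
  have hp := Fact.out (p := p.Prime)
  have hi : K.index = p := by
    have := K.card_mul_index
    rw [hK, hn, pow_succ] at this
    exact Nat.eq_of_mul_eq_mul_left (pow_pos hp.pos n) this
  have : K.Normal := by
    apply Subgroup.normal_of_index_eq_minFac_card
    rw [hi, hn, hp.pow_minFac n.succ_ne_zero]
  have hle : powSubgroup p H ≤ K.map H.subtype := by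
    rw [powSubgroup_le_iff]
    intro h hh
    exact ⟨⟨h, hh⟩ ^ p, by rw [← hi]; exact K.pow_index_mem _, rfl⟩
  refine (powSubgroup_le p H).lt_of_ne fun he => ?_
  rw [he] at hle
  have htop : K = ⊤ := by
    rw [eq_top_iff]
    intro x _
    obtain ⟨y, hy, hyx⟩ := hle x.2
    rwa [← Subtype.ext hyx]
  rw [htop, Subgroup.index_top] at hi
  exact hp.one_lt.ne hi

theorem exists_powSeries_eq_bot {p : ℕ} [Fact p.Prime] {G : Type*} [Group G] [Finite G]
    (hG : IsPGroup p G) : ∃ N, powSeries p G N = ⊥ := by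
  by_contra! h
  have key : ∀ k, Nat.card (powSeries p G k) + k ≤ Nat.card G := by
    intro k
    induction k with
    | zero => exact Subgroup.card_le_card_group _
    | succ k ih =>
      have : Nat.card (powSeries p G (k + 1)) < Nat.card (powSeries p G k) :=
        Set.ncard_lt_ncard (powSubgroup_lt hG (h k)) (Set.toFinite _)
      omega
  have := key (Nat.card G)
  have := Nat.card_pos (α := powSeries p G (Nat.card G))
  omega

/-- `G` is a powerful `p`-group for an odd prime `p`. -/
structure IsPowerful (p : ℕ) (G : Type*) [Group G] : Prop where
  prime : p.Prime
  odd : Odd p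
  isPGroup : IsPGroup p G
  commutator_le : commutator G ≤ pPowFin p G

namespace IsPowerful

theorem isNilpotent {p : ℕ} {G : Type*} [Group G] [Finite G] (hG : IsPowerful p G) :
    Group.IsNilpotent G :=
  haveI := Fact.mk hG.prime
  hG.isPGroup.isNilpotent

theorem exists_powSeries_eq_bot {p : ℕ} {G : Type*} [Group G] [Finite G] (hG : IsPowerful p G) :
    ∃ N, powSeries p G N = ⊥ :=
  haveI := Fact.mk hG.prime
  _root_.exists_powSeries_eq_bot hG.isPGroup

theorem commutatorElement_mem {p : ℕ} {G : Type*} [Group G] [Finite G] (hG : IsPowerful p G)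
    {a b m : ℕ} (hm : m ≤ a + b + 1) {x y : G} (hx : x ∈ powSeries p G a)
    (hy : y ∈ powSeries p G b) : ⁅x, y⁆ ∈ powSeries p G m :=
  haveI := hG.isNilpotent
  powSeries_antitone p G hm (commutator_powSeries_le hG.odd hG.commutator_le a b
    (Subgroup.commutator_mem_commutator hx hy))

theorem mk_mul_pow {p : ℕ} {G : Type*} [Group G] [Finite G] (hG : IsPowerful p G)
    {a b m : ℕ} (hm : m ≤ a + b + 2) {x y : G} (hx : x ∈ powSeries p G a)
    (hy : y ∈ powSeries p G b) :
    (((x * y) ^ p : G) : G ⧸ powSeries p G m) = ((x ^ p * y ^ p : G) : G ⧸ powSeries p G m) := by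
  have hu : ⁅y⁻¹, x⁻¹⁆ ∈ powSeries p G (a + b + 1) :=
    hG.commutatorElement_mem (by omega) (inv_mem hy) (inv_mem hx)
  have hu' (w : G) : Commute ((⁅y⁻¹, x⁻¹⁆ : G) : G ⧸ powSeries p G m) w :=
    commutatorElement_mem_iff_commute.1
      (hG.commutatorElement_mem (b := 0) (by omega) hu (Subgroup.mem_top w))
  exact mul_pow_odd hG.odd (congrArg (QuotientGroup.mk' (powSeries p G m))
      (mul_eq_mul_commutator y x)) (hu' y) (hu' x)
    (commutatorElement_mem_iff_commute.1
      (hG.commutatorElement_mem (by omega) (pow_mem_powSeries hy) hx))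

theorem exists_mk_eq_pow {p : ℕ} {G : Type*} [Group G] [Finite G] (hG : IsPowerful p G)
    {k : ℕ} {g : G} (hg : g ∈ powSeries p G (k + 1)) :
    ∃ s ∈ powSeries p G k,
      (g : G ⧸ powSeries p G (k + 2)) = ((s ^ p : G) : G ⧸ powSeries p G (k + 2)) := by
  rw [powSeries, powSubgroup] at hg
  induction hg using Subgroup.closure_induction with
  | mem g hg =>
    obtain ⟨s, hs, rfl⟩ := hg
    exact ⟨s, hs, rfl⟩
  | one => exact ⟨1, one_mem _, by simp⟩
  | mul g g' _ _ h h' =>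
    obtain ⟨s, hs, h⟩ := h
    obtain ⟨t, ht, h'⟩ := h'
    refine ⟨s * t, mul_mem hs ht, ?_⟩
    rw [hG.mk_mul_pow (by omega) hs ht, QuotientGroup.mk_mul, QuotientGroup.mk_mul, h, h']
  | inv g _ h =>
    obtain ⟨s, hs, h⟩ := h
    refine ⟨s⁻¹, inv_mem hs, ?_⟩
    rw [QuotientGroup.mk_inv, h, inv_pow, QuotientGroup.mk_inv]

theorem exists_eq_pow {p : ℕ} {G : Type*} [Group G] [Finite G] (hG : IsPowerful p G)
    {k : ℕ} {g : G} (hg : g ∈ powSeries p G (k + 1)) : ∃ x ∈ powSeries p G k, g = x ^ p := by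
  have key : ∀ m, ∃ x ∈ powSeries p G k, (x ^ p)⁻¹ * g ∈ powSeries p G (k + m + 2) := by
    intro m
    induction m with
    | zero =>
      obtain ⟨s, hs, h⟩ := hG.exists_mk_eq_pow hg
      exact ⟨s, hs, QuotientGroup.eq.1 h.symm⟩
    | succ m ih =>
      obtain ⟨x, hx, h⟩ := ih
      obtain ⟨s, hs, h'⟩ := hG.exists_mk_eq_pow h
      refine ⟨x * s, mul_mem hx (powSeries_antitone p G (by omega) hs), QuotientGroup.eq.1 ?_⟩
      rw [show k + (m + 1) + 2 = k + m + 1 + 2 by ring, hG.mk_mul_pow (by omega) hx hs,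
        QuotientGroup.mk_mul, ← h', ← QuotientGroup.mk_mul, mul_inv_cancel_left]
  obtain ⟨N, hN⟩ := hG.exists_powSeries_eq_bot
  obtain ⟨x, hx, h⟩ := key N
  have : (x ^ p)⁻¹ * g ∈ powSeries p G N := powSeries_antitone p G (by omega) h
  rw [hN, Subgroup.mem_bot] at this
  exact ⟨x, hx, (inv_mul_eq_one.1 this).symm⟩

theorem exists_mul_pow_eq_one {p : ℕ} {G : Type*} [Group G] [Finite G] (hG : IsPowerful p G)
    {k : ℕ} {x : G} (hx : x ∈ powSeries p G k) (hxp : x ^ p ∈ powSeries p G (k + 2)) :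
    ∃ q ∈ powSeries p G (k + 1), (x * q) ^ p = 1 := by
  have key : ∀ m, ∃ q ∈ powSeries p G (k + 1), (x * q) ^ p ∈ powSeries p G (k + m + 2) := by
    intro m
    induction m with
    | zero => exact ⟨1, one_mem _, by simpa using hxp⟩
    | succ m ih =>
      obtain ⟨q, hq, h⟩ := ih
      obtain ⟨r, hr, h'⟩ := hG.exists_eq_pow h
      refine ⟨q * r⁻¹, mul_mem hq (inv_mem (powSeries_antitone p G (by omega) hr)), ?_⟩
      rw [show k + (m + 1) + 2 = k + m + 1 + 2 by ring, ← mul_assoc, ← QuotientGroup.eq_one_iff,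
        hG.mk_mul_pow (by omega) (mul_mem hx (powSeries_antitone p G (by omega) hq)) (inv_mem hr),
        h', inv_pow, mul_inv_cancel, QuotientGroup.mk_one]
  obtain ⟨N, hN⟩ := hG.exists_powSeries_eq_bot
  obtain ⟨q, hq, h⟩ := key N
  have : (x * q) ^ p ∈ powSeries p G N := powSeries_antitone p G (by omega) h
  rw [hN, Subgroup.mem_bot] at this
  exact ⟨q, hq, this⟩

theorem eq_top_of_sup_eq_top {p : ℕ} {G : Type*} [Group G] [Finite G] (hG : IsPowerful p G)
    {H : Subgroup G} (hH : H ⊔ powSeries p G 1 = ⊤) : H = ⊤ := by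
  have key : ∀ k, H ⊔ powSeries p G (k + 1) = ⊤ := by
    intro k
    induction k with
    | zero => exact hH
    | succ k ih =>
      have h1 : powSeries p G 1 ≤ H ⊔ powSeries p G (k + 2) := by
        refine powSubgroup_le_iff.2 fun g _ => ?_
        obtain ⟨h, hh, q, hq, rfl⟩ :=
          Subgroup.mem_sup_of_normal_right.1 (ih ▸ Subgroup.mem_top g)
        have := QuotientGroup.eq.1 (hG.mk_mul_pow (m := k + 2) (by omega)
          (show h ∈ powSeries p G 0 from trivial) hq).symm
        rw [← mul_inv_cancel_left (h ^ p * q ^ p) ((h * q) ^ p)]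
        exact mul_mem (mul_mem (Subgroup.mem_sup_left (pow_mem hh p))
          (Subgroup.mem_sup_right (pow_mem_powSeries hq))) (Subgroup.mem_sup_right this)
      exact top_unique (hH ▸ sup_le le_sup_left h1)
  obtain ⟨N, hN⟩ := hG.exists_powSeries_eq_bot
  have := key N
  rwa [eq_bot_mono (powSeries_antitone p G N.le_succ) hN, sup_bot_eq] at this

theorem subgroup {p : ℕ} {G : Type*} [Group G] (hG : IsPowerful p G) {T : Subgroup G}
    (hT : ⁅T, T⁆ ≤ powSubgroup p T) : IsPowerful p T where
  prime := hG.prime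
  odd := hG.odd
  isPGroup := hG.isPGroup.to_subgroup T
  commutator_le := by
    rw [← Subgroup.map_le_map_iff_of_injective T.subtype_injective,
      Subgroup.map_subtype_commutator, ← powSubgroup_top, map_powSubgroup, ← MonoidHom.range_eq_map,
      T.range_subtype]
    exact hT

theorem quotient {p : ℕ} {G : Type*} [Group G] (hG : IsPowerful p G) (E : Subgroup G) [E.Normal] :
    IsPowerful p (G ⧸ E) where
  prime := hG.prime
  odd := hG.odd
  isPGroup := hG.isPGroup.to_quotient E
  commutator_le := by
    have htop : (⊤ : Subgroup G).map (QuotientGroup.mk' E) = ⊤ :=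
      Subgroup.map_top_of_surjective _ (QuotientGroup.mk'_surjective E)
    rw [commutator_def, ← htop, ← Subgroup.map_commutator, ← powSubgroup_top, ← htop,
      ← map_powSubgroup, powSubgroup_top]
    exact Subgroup.map_mono hG.commutator_le

theorem zpowers_sup {p : ℕ} {G : Type*} [Group G] [Finite G] (hG : IsPowerful p G) (x : G) :
    IsPowerful p (Subgroup.zpowers x ⊔ powSeries p G 1 : Subgroup G) := by
  apply hG.subgroup
  refine le_trans ?_ (powSubgroup_mono p (le_sup_right : powSeries p G 1 ≤ _))
  have hc {q : G} (hq : q ∈ powSeries p G 1) (w : G) :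
      Commute (q : G ⧸ powSeries p G 2) (w : G ⧸ powSeries p G 2) :=
    commutatorElement_mem_iff_commute.1
      (hG.commutatorElement_mem (b := 0) (by omega) hq (Subgroup.mem_top w))
  rw [Subgroup.commutator_le]
  intro t ht t' ht'
  obtain ⟨_, ⟨k, rfl⟩, q, hq, rfl⟩ := Subgroup.mem_sup_of_normal_right.1 ht
  obtain ⟨_, ⟨l, rfl⟩, q', hq', rfl⟩ := Subgroup.mem_sup_of_normal_right.1 ht'
  have h : Commute ((x ^ k : G) : G ⧸ powSeries p G 2) ((x ^ l : G) : G ⧸ powSeries p G 2) :=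
    ((Commute.refl x).zpow_zpow k l).map (QuotientGroup.mk' (powSeries p G 2))
  exact commutatorElement_mem_iff_commute.2
    ((h.mul_right (hc hq' (x ^ k)).symm).mul_left (hc hq (x ^ l * q')))

theorem commutatorElement_pow_eq_one {p : ℕ} {G : Type*} [Group G] [Finite G]
    (hG : IsPowerful p G)
    (ih : ∀ T : Subgroup G, Nat.card T < Nat.card G → IsPowerful p T →
      ∀ (i : ℕ) (x y : T), x ^ p ^ i = 1 → y ^ p ^ i = 1 → (x * y) ^ p ^ i = 1)
    {i : ℕ} {x : G} (hx : x ^ p ^ i = 1) (g : G) : ⁅x⁻¹, g⁻¹⁆ ^ p ^ i = 1 := by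
  set T := Subgroup.zpowers x ⊔ powSeries p G 1 with hT
  by_cases h : T = ⊤
  · have hz : Subgroup.zpowers x = ⊤ := hG.eq_top_of_sup_eq_top h
    obtain ⟨k, rfl⟩ : g ∈ Subgroup.zpowers x := hz ▸ Subgroup.mem_top g
    have : Commute x⁻¹ (x ^ k)⁻¹ := ((Commute.refl x).zpow_right k).inv_inv
    simp [commutatorElement_eq_one_iff_commute.2 this]
  · have hcard : Nat.card T < Nat.card G := by
      rw [← Subgroup.card_top (G := G)]
      exact Set.ncard_lt_ncard (SetLike.coe_ssubset_coe.2 (lt_top_iff_ne_top.2 h)) (Set.toFinite _)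
    have hxT : x ∈ T := Subgroup.mem_sup_left (Subgroup.mem_zpowers x)
    have hcT : ⁅x⁻¹, g⁻¹⁆ ∈ T := Subgroup.mem_sup_right
      (hG.commutatorElement_mem (a := 0) (b := 0) le_rfl (Subgroup.mem_top _) (Subgroup.mem_top _))
    have hconj : x * ⁅x⁻¹, g⁻¹⁆ = g⁻¹ * x * g⁻¹⁻¹ := by
      simp [commutatorElement_def, mul_assoc]
    have := ih T hcard (hG.zpowers_sup x) i ⟨x⁻¹, inv_mem hxT⟩
      ⟨x * ⁅x⁻¹, g⁻¹⁆, mul_mem hxT hcT⟩ (Subtype.ext (by simp [hx]))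
      (Subtype.ext (by simp only [hconj, SubmonoidClass.mk_pow, conj_pow, hx]; simp))
    simpa using congrArg Subtype.val this

theorem commute_of_pow_eq_one {p : ℕ} {G : Type*} [Group G] [Finite G] (hG : IsPowerful p G)
    (hcomm : ∀ (i : ℕ) (x g : G), x ^ p ^ i = 1 → ⁅x⁻¹, g⁻¹⁆ ^ p ^ i = 1)
    {i j a b : ℕ} {x y : G} (hx : x ∈ powSeries p G a) (hxi : x ^ p ^ i = 1)
    (hy : y ∈ powSeries p G b) (hyj : y ^ p ^ j = 1) (hij : i + j ≤ a + b + 1) :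
    Commute x y := by
  obtain ⟨N, hN⟩ := hG.exists_powSeries_eq_bot
  suffices H : ∀ (m i j a b : ℕ) (x y : G), N ≤ a + b + 1 + m → x ∈ powSeries p G a →
      x ^ p ^ i = 1 → y ∈ powSeries p G b → y ^ p ^ j = 1 → i + j ≤ a + b + 1 → Commute x y from
    H N i j a b x y (by omega) hx hxi hy hyj hij
  clear! x y i j a b
  intro m
  induction m with
  | zero =>
    intro i j a b x y hm hx _ hy _ _
    have := hG.commutatorElement_mem hm hx hy
    rwa [hN, Subgroup.mem_bot, commutatorElement_eq_one_iff_commute] at this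
  | succ m ih =>
    suffices H : ∀ (i j a b : ℕ) (x y : G), N ≤ a + b + 1 + (m + 1) → x ∈ powSeries p G a →
        x ^ p ^ i = 1 → y ∈ powSeries p G b → y ^ p ^ j = 1 → i + j ≤ a + b + 1 → i ≤ b →
        Commute x y by
      intro i j a b x y hm hx hxi hy hyj hij
      by_cases hib : i ≤ b
      · exact H i j a b x y hm hx hxi hy hyj hij hib
      · exact (H j i b a y x (by omega) hy hyj hx hxi (by omega) (by omega)).symm
    intro i
    induction i with
    | zero =>
      intro j a b x y _ _ hx _ _ _ _
      rw [pow_zero, pow_one] at hx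
      exact hx ▸ Commute.one_left y
    | succ i ihi =>
      intro j a b x y hm hx hxi hy hyj hij hib
      obtain ⟨b, rfl⟩ := Nat.exists_eq_succ_of_ne_zero (by omega : b ≠ 0)
      obtain ⟨f, hf, rfl⟩ := hG.exists_eq_pow hy
      have hpow (z : G) (k : ℕ) : (z ^ p) ^ p ^ k = z ^ p ^ (k + 1) := by
        rw [← pow_mul, ← pow_succ']
      rw [hpow] at hyj
      set c := ⁅x⁻¹, f⁻¹⁆ with hc
      have hcP : c ∈ powSeries p G (a + b + 1) :=
        hG.commutatorElement_mem le_rfl (inv_mem hx) (inv_mem hf)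
      have hci : c ^ p ^ (i + 1) = 1 := hcomm _ x f hxi
      have hcj : c ^ p ^ (j + 1) = 1 := by
        rw [hc, ← commutatorElement_inv, inv_pow, hcomm _ f x hyj, inv_one]
      set d := ⁅c⁻¹, f⁻¹⁆
      have hdP : d ∈ powSeries p G (a + b + 1 + b + 1) :=
        hG.commutatorElement_mem le_rfl (inv_mem hcP) (inv_mem hf)
      have hdi : d ^ p ^ (i + 1) = 1 := hcomm _ c f hci
      set u := ⁅c⁻¹, x⁻¹⁆
      have huP : u ∈ powSeries p G (a + b + 1 + a + 1) :=
        hG.commutatorElement_mem le_rfl (inv_mem hcP) (inv_mem hx)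
      have huj : u ^ p ^ (j + 1) = 1 := hcomm _ c x hcj
      refine commute_pow_of_pow_commute hG.odd (mul_eq_conj_commutator x f)
        (mul_eq_mul_commutator c f) (mul_eq_mul_commutator c x) ?_ ?_ ?_ ?_ ?_ ?_ ?_
      · exact ih _ _ _ _ _ _ (by omega) hdP hdi hcP hcj (by omega)
      · exact ih _ _ _ _ _ _ (by omega) hdP hdi hf hyj (by omega)
      · exact ih _ _ _ _ _ _ (by omega) huP huj hcP hci (by omega)
      · exact ih _ _ _ _ _ _ (by omega) huP huj hx hxi (by omega)
      · exact ih _ _ _ _ _ _ (by omega) (pow_mem_powSeries hcP) ((hpow c i).trans hci) hf hyj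
          (by omega)
      · exact ih _ _ _ _ _ _ (by omega) (pow_mem_powSeries hcP) ((hpow c j).trans hcj) hx hxi
          (by omega)
      · exact ihi _ _ _ _ _ (by omega) (pow_mem_powSeries hx) ((hpow x i).trans hxi) hf hyj
          (by omega) (by omega)

theorem mul_pow_eq_one {p : ℕ} {G : Type*} [Group G] [Finite G] (hG : IsPowerful p G)
    {i : ℕ} {x y : G} (hx : x ^ p ^ i = 1) (hy : y ^ p ^ i = 1) : (x * y) ^ p ^ i = 1 := by
  induction hn : Nat.card G using Nat.strong_induction_on generalizing G i with
  | _ n ih =>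
  subst hn
  have hcomm : ∀ (i : ℕ) (x g : G), x ^ p ^ i = 1 → ⁅x⁻¹, g⁻¹⁆ ^ p ^ i = 1 := fun i x g hx =>
    hG.commutatorElement_pow_eq_one
      (fun T hT hTp i x y hx hy => ih _ hT hTp hx hy rfl) hx g
  have hone : ∀ x y : G, x ^ p = 1 → y ^ p = 1 → (x * y) ^ p = 1 := by
    intro x y hx hy
    have hu : ∀ w : G, w ^ p = 1 → Commute ⁅y⁻¹, x⁻¹⁆ w := fun w hw =>
      hG.commute_of_pow_eq_one hcomm (i := 1) (j := 1) (a := 1) (b := 0)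
        (hG.commutatorElement_mem (a := 0) (b := 0) le_rfl (Subgroup.mem_top _)
          (Subgroup.mem_top _)) (hcomm 1 y x (by simpa using hy)) (Subgroup.mem_top w)
        (by simpa using hw) le_rfl
    rw [mul_pow_odd hG.odd (mul_eq_mul_commutator y x) (hu y hy) (hu x hx) (by simp [hy]), hx, hy,
      one_mul]
  let E : Subgroup G :=
    { carrier := {x | x ^ p = 1}
      one_mem' := one_pow p
      mul_mem' := fun hx hy => hone _ _ hx hy
      inv_mem' := fun {x} (hx : x ^ p = 1) => by simp [hx] }
  have hE : E.Normal := ⟨fun n (hn : n ^ p = 1) g => by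
    change (g * n * g⁻¹) ^ p = 1
    rw [conj_pow, hn, mul_one, mul_inv_cancel]⟩
  obtain h | h := subsingleton_or_nontrivial G
  · exact Subsingleton.elim _ _
  cases i with
  | zero => simp_all
  | succ i =>
    have := Fact.mk hG.prime
    have hdvd : p ∣ Nat.card G := by
      obtain ⟨n, hn, hn'⟩ := hG.isPGroup.nontrivial_iff_card.1 h
      rw [hn']
      exact dvd_pow_self p hn.ne'
    obtain ⟨g, hg⟩ := exists_prime_orderOf_dvd_card' p hdvd
    have hEbot : E ≠ ⊥ := by
      intro he
      have : g ∈ E := by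
        change g ^ p = 1
        rw [← hg, pow_orderOf_eq_one]
      rw [he, Subgroup.mem_bot] at this
      rw [this, orderOf_one] at hg
      exact hG.prime.one_lt.ne hg
    have hcard : Nat.card (G ⧸ E) < Nat.card G := by
      have h1 := E.card_mul_index
      have h2 := (Subgroup.one_lt_card_iff_ne_bot E).2 hEbot
      rw [← h1, Subgroup.index]
      exact lt_mul_left Nat.card_pos h2
    have hmk (z : G) : z ^ p ^ (i + 1) = 1 ↔ (z : G ⧸ E) ^ p ^ i = 1 := by
      rw [← QuotientGroup.mk_pow, QuotientGroup.eq_one_iff, pow_succ, pow_mul]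
      rfl
    rw [hmk] at hx hy ⊢
    exact ih _ hcard (hG.quotient E) hx hy rfl

theorem mem_Omega1_iff {p : ℕ} {G : Type*} [Group G] [Finite G] (hG : IsPowerful p G) {x : G} :
    x ∈ Omega1 p G ↔ x ^ p = 1 := by
  refine ⟨fun hx => ?_, fun hx => Subgroup.subset_closure hx⟩
  induction hx using Subgroup.closure_induction with
  | mem x hx => exact hx
  | one => exact one_pow p
  | mul x y _ _ hx hy =>
    simpa using hG.mul_pow_eq_one (i := 1) (by simpa using hx) (by simpa using hy)
  | inv x _ hx => rw [inv_pow, hx, inv_one]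

theorem relIndex_sup_powSeries {p : ℕ} {G : Type*} [Group G] [Finite G] (hG : IsPowerful p G)
    (k : ℕ) : (Omega1 p G ⊓ powSeries p G k ⊔ powSeries p G (k + 1)).relIndex (powSeries p G k) =
      (powSeries p G (k + 2)).relIndex (powSeries p G (k + 1)) := by
  let f : powSeries p G k →* G ⧸ powSeries p G (k + 2) :=
    MonoidHom.mk' (fun x => (((x : G) ^ p : G) : G ⧸ powSeries p G (k + 2)))
      fun x y => hG.mk_mul_pow (by omega) x.2 y.2
  have hker : (Omega1 p G ⊓ powSeries p G k ⊔ powSeries p G (k + 1)).subgroupOf (powSeries p G k) =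
      f.ker := by
    ext ⟨x, hx⟩
    rw [Subgroup.mem_subgroupOf, MonoidHom.mem_ker]
    change x ∈ _ ↔ ((x ^ p : G) : G ⧸ powSeries p G (k + 2)) = 1
    rw [QuotientGroup.eq_one_iff]
    refine ⟨fun h => ?_, fun h => ?_⟩
    · obtain ⟨y, ⟨hy, hyk⟩, z, hz, rfl⟩ := Subgroup.mem_sup_of_normal_right.1 h
      rw [← QuotientGroup.eq_one_iff, hG.mk_mul_pow (by omega) hyk hz, hG.mem_Omega1_iff.1 hy,
        one_mul, QuotientGroup.eq_one_iff]
      exact pow_mem_powSeries hz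
    · obtain ⟨q, hq, hxq⟩ := hG.exists_mul_pow_eq_one hx h
      rw [← mul_inv_cancel_right x q]
      exact mul_mem (Subgroup.mem_sup_left ⟨hG.mem_Omega1_iff.2 hxq,
        mul_mem hx (powSeries_antitone p G k.le_succ hq)⟩) (Subgroup.mem_sup_right (inv_mem hq))
  have hrange : f.range = (powSeries p G (k + 1)).map (QuotientGroup.mk' _) := by
    ext z
    constructor
    · rintro ⟨x, rfl⟩
      exact ⟨(x : G) ^ p, pow_mem_powSeries x.2, rfl⟩
    · rintro ⟨y, hy, rfl⟩
      obtain ⟨x, hx, rfl⟩ := hG.exists_eq_pow hy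
      exact ⟨⟨x, hx⟩, rfl⟩
  rw [Subgroup.relIndex, hker, Subgroup.index_ker, hrange, ← Subgroup.relIndex_ker,
    QuotientGroup.ker_mk']

theorem card_Omega1_inf_mul {p : ℕ} {G : Type*} [Group G] [Finite G] (hG : IsPowerful p G)
    (k : ℕ) : Nat.card (Omega1 p G ⊓ powSeries p G k : Subgroup G) *
      Nat.card (powSeries p G (k + 1)) = Nat.card (powSeries p G k) := by
  have hcard {H K : Subgroup G} (h : H ≤ K) : Nat.card H * H.relIndex K = Nat.card K := by
    simpa using Subgroup.relIndex_mul_relIndex ⊥ H K bot_le h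
  obtain ⟨N, hN⟩ := hG.exists_powSeries_eq_bot
  suffices H : ∀ m k, N ≤ k + m → Nat.card (Omega1 p G ⊓ powSeries p G k : Subgroup G) *
      Nat.card (powSeries p G (k + 1)) = Nat.card (powSeries p G k) from H N k (by omega)
  intro m
  induction m with
  | zero =>
    intro k hk
    have h1 : powSeries p G k = ⊥ := eq_bot_mono (powSeries_antitone p G hk) hN
    have h2 : powSeries p G (k + 1) = ⊥ := eq_bot_mono (powSeries_antitone p G k.le_succ) h1
    simp [h1, h2]
  | succ m ih =>
    intro k hk
    have ih := ih (k + 1) (by omega)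
    have hanti := powSeries_antitone p G k.le_succ
    set A := powSeries p G k
    set B := powSeries p G (k + 1)
    set O := Omega1 p G
    have h1 := hcard (sup_le inf_le_right hanti : O ⊓ A ⊔ B ≤ A)
    rw [hG.relIndex_sup_powSeries] at h1
    have h2 := hcard (le_sup_right : B ≤ O ⊓ A ⊔ B)
    rw [Subgroup.relIndex_sup_right, ← Subgroup.inf_relIndex_right,
      show B ⊓ (O ⊓ A) = O ⊓ B by rw [inf_left_comm, inf_eq_left.2 hanti]] at h2
    have h3 := hcard (inf_le_inf_left O hanti)
    have h4 := hcard (powSeries_antitone p G (k + 1).le_succ)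
    rw [← h1, ← h2, ← h3]
    conv_lhs => rw [← h4]
    rw [← ih]
    change _ * _ * (Nat.card (powSeries p G (k + 2)) * _) = _
    ring

theorem card_Omega1 {p : ℕ} {G : Type*} [Group G] [Finite G] (hG : IsPowerful p G) :
    Nat.card (Omega1 p G) = (powSeries p G 1).index := by
  have h1 := hG.card_Omega1_inf_mul 0
  have h2 := (powSeries p G 1).index_mul_card
  rw [powSeries, inf_top_eq, Subgroup.card_top, ← h2] at h1
  exact Nat.eq_of_mul_eq_mul_right Nat.card_pos h1

end IsPowerful

theorem pow_genNum_eq_card {p : ℕ} [Fact p.Prime] {G Q : Type*} [Group G] [CommGroup Q] [Finite Q]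
    (hQ : ∀ q : Q, q ^ p = 1) (f : G →* Q) (hf : Function.Surjective f)
    (htop : ∀ H : Subgroup G, H.map f = ⊤ → H = ⊤) : p ^ genNum G = Nat.card Q := by
  classical
  let : Module (ZMod p) (Additive Q) := AddCommGroup.zmodModule (n := p) fun q => hQ q.toMul
  have hcard : Nat.card Q = p ^ Module.finrank (ZMod p) (Additive Q) := by
    have := Module.natCard_eq_pow_finrank (K := ZMod p) (V := Additive Q)
    rwa [Nat.card_zmod] at this
  have hbasis : ∃ S : Finset G, S.card ≤ Module.finrank (ZMod p) (Additive Q) ∧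
      Subgroup.closure (S : Set G) = ⊤ := by
    let b := Module.finBasis (ZMod p) (Additive Q)
    choose g hg using fun i => hf (b i).toMul
    refine ⟨Finset.univ.image g, Finset.card_image_le.trans (by simp), htop _ ?_⟩
    set H := Subgroup.closure ((Finset.univ.image g : Finset G) : Set G)
    have hspan : (⊤ : Submodule (ZMod p) (Additive Q)) ≤
        AddSubgroup.toZModSubmodule p (H.map f).toAddSubgroup := by
      rw [← b.span_eq, Submodule.span_le]
      rintro _ ⟨i, rfl⟩
      have h : f (g i) ∈ H.map f := Subgroup.mem_map_of_mem f (Subgroup.subset_closure (by simp))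
      rwa [hg] at h
    exact eq_top_iff.2 fun q _ => hspan (Submodule.mem_top (x := Additive.ofMul q))
  rw [hcard]
  congr 1
  apply le_antisymm
  · obtain ⟨S, hS, hS'⟩ := hbasis
    have h : genNum G ≤ S.card := Nat.sInf_le ⟨S, rfl, hS'⟩
    exact h.trans hS
  · obtain ⟨S, -, hS⟩ := hbasis
    obtain ⟨T, hT, hT'⟩ := Nat.sInf_mem (s := {n | ∃ S : Finset G, S.card = n ∧
      Subgroup.closure (S : Set G) = ⊤}) ⟨_, S, rfl, hS⟩
    rw [genNum, ← hT]
    let U : Finset (Additive Q) := T.image fun g => Additive.ofMul (f g)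
    have hU : Submodule.span (ZMod p) (U : Set (Additive Q)) = ⊤ := by
      have h : Subgroup.closure (T : Set G) ≤ (AddSubgroup.toSubgroup
          (Submodule.span (ZMod p) (U : Set (Additive Q))).toAddSubgroup).comap f := by
        rw [Subgroup.closure_le]
        intro g hg
        exact Submodule.subset_span (Finset.mem_image_of_mem _ hg)
      rw [hT'] at h
      refine eq_top_iff.2 fun q _ => ?_
      obtain ⟨g, hg⟩ := hf q.toMul
      have hg' : Additive.ofMul (f g) ∈ Submodule.span (ZMod p) (U : Set (Additive Q)) :=
        h (Subgroup.mem_top g)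
      rwa [hg] at hg'
    calc Module.finrank (ZMod p) (Additive Q) = (U : Set (Additive Q)).finrank (ZMod p) := by
          rw [Set.finrank, hU, finrank_top]
      _ ≤ U.card := finrank_span_finset_le_card U
      _ ≤ T.card := Finset.card_image_le

theorem IsPowerful.pow_genNum {p : ℕ} {G : Type*} [Group G] [Finite G] (hG : IsPowerful p G) :
    p ^ genNum G = (powSeries p G 1).index := by
  have := Fact.mk hG.prime
  let : CommGroup (G ⧸ powSeries p G 1) :=
    { (inferInstance : Group (G ⧸ powSeries p G 1)) with
      mul_comm := by
        rintro ⟨x⟩ ⟨y⟩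
        exact commutatorElement_mem_iff_commute.1
          (hG.commutatorElement_mem (a := 0) (b := 0) le_rfl (Subgroup.mem_top x)
            (Subgroup.mem_top y)) }
  refine pow_genNum_eq_card ?_ (QuotientGroup.mk' (powSeries p G 1))
    (QuotientGroup.mk'_surjective _) fun H hH => hG.eq_top_of_sup_eq_top ?_
  · rintro ⟨x⟩
    exact (QuotientGroup.eq_one_iff (x ^ p)).2 (pow_mem_powSeries (k := 0) (Subgroup.mem_top x))
  · have := congrArg (Subgroup.comap (QuotientGroup.mk' (powSeries p G 1))) hH
    rwa [Subgroup.comap_map_eq, QuotientGroup.ker_mk', Subgroup.comap_top] at this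

/-- For `p ≥ 3`, a powerful finite `p`-group satisfies `d(G) = log_p |Ω₁(G)|`. -/
theorem d_eq_log_omega_of_powerful (p : ℕ) (hp : p.Prime) (hp3 : 3 ≤ p)
    (G : Type*) [Group G] [Finite G] (hG : IsPGroup p G)
    (hpow : commutator G ≤ pPowFin p G) :
    p ^ genNum G = Nat.card (Omega1 p G) := by
  have h : IsPowerful p G := ⟨hp, hp.odd_of_ne_two (by omega), hG, hpow⟩
  rw [h.pow_genNum, h.card_Omega1]
end
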